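/- Fix integers m > 4 and n ≥ 3, and a real number σ with σ − m + 4 ≥ 3, and place m candidates on the real line at y_1 = −σ + (m−2), y_2 = 0, y_3 = 1, …, y_m = m−2. Then every strategy-proof randomized two-winner scv mechanism for these m candidates and n voters has distortion at least (1/12)·min{n, √(σ − m + 4)} on this candidate configuration. -/

import Mathlib

open Finset

/-- Cost of a point `z` when the pair of candidates `(y k, y l)` is elected:
the distance to the closer of the two winners. -/
noncomputable def pairCost {α : Type*} [PseudoMetricSpace α] {m : ℕ}
    (y : Fin m → α) (k l : Fin m) (z : α) : ℝ :=
  min (dist z (y k)) (dist z (y l))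

/-- Social cost of the pair `(y k, y l)` on the location profile `x`. -/
noncomputable def socialCost {α : Type*} [PseudoMetricSpace α] {m n : ℕ}
    (y : Fin m → α) (k l : Fin m) (x : Fin n → α) : ℝ :=
  ∑ i, pairCost y k l (x i)

/-- Optimal social cost over all pairs of distinct candidates. -/
noncomputable def OPT {α : Type*} [PseudoMetricSpace α] {m n : ℕ}
    (y : Fin m → α) (x : Fin n → α) : ℝ :=
  sInf {c : ℝ | ∃ k l : Fin m, k ≠ l ∧ c = socialCost y k l x}

/-- A location profile `x` is consistent with an action profile `a` if every
voter votes for (one of) her nearest candidate(s). -/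
def Consistent {α : Type*} [PseudoMetricSpace α] {m n : ℕ}
    (y : Fin m → α) (a : Fin n → Fin m) (x : Fin n → α) : Prop :=
  ∀ (i : Fin n) (k : Fin m), dist (x i) (y (a i)) ≤ dist (x i) (y k)

/-- `f` is a randomized two-winner mechanism: on every action profile it gives a
probability distribution over unordered pairs of distinct candidates
(represented by a symmetric nonnegative function vanishing on the diagonal whose
values over the pairs `k < l` sum to one). -/
def IsRandMech {m n : ℕ} (f : (Fin n → Fin m) → Fin m → Fin m → ℝ) : Prop :=
  ∀ a : Fin n → Fin m, (∀ k l, 0 ≤ f a k l) ∧ (∀ k l, f a k l = f a l k) ∧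
    (∀ k, f a k k = 0) ∧
    ∑ p ∈ univ.filter (fun p : Fin m × Fin m => p.1 < p.2), f a p.1 p.2 = 1

/-- Expected cost of the point `z` under the lottery `f a`. -/
noncomputable def expCost {α : Type*} [PseudoMetricSpace α] {m n : ℕ}
    (y : Fin m → α) (f : (Fin n → Fin m) → Fin m → Fin m → ℝ)
    (a : Fin n → Fin m) (z : α) : ℝ :=
  ∑ p ∈ univ.filter (fun p : Fin m × Fin m => p.1 < p.2),
    f a p.1 p.2 * pairCost y p.1 p.2 z

/-- Expected social cost of the randomized mechanism `f` on action profile `a`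
and location profile `x`. -/
noncomputable def expSC {α : Type*} [PseudoMetricSpace α] {m n : ℕ}
    (y : Fin m → α) (f : (Fin n → Fin m) → Fin m → Fin m → ℝ)
    (a : Fin n → Fin m) (x : Fin n → α) : ℝ :=
  ∑ p ∈ univ.filter (fun p : Fin m × Fin m => p.1 < p.2),
    f a p.1 p.2 * socialCost y p.1 p.2 x

/-- Strategy-proofness of a randomized two-winner mechanism: voting for a
nearest candidate always minimizes a voter's expected cost, whatever the
other voters do. -/
def RandSP {α : Type*} [PseudoMetricSpace α] {m n : ℕ}
    (y : Fin m → α) (f : (Fin n → Fin m) → Fin m → Fin m → ℝ) : Prop :=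
  ∀ (i : Fin n) (xi : α) (a : Fin n → Fin m) (astar ai' : Fin m),
    (∀ k, dist xi (y astar) ≤ dist xi (y k)) →
    expCost y f (Function.update a i astar) xi ≤
      expCost y f (Function.update a i ai') xi

/-!
Let the candidates sit at `-L, 0, 1, 2` and beyond, and fix a voter `v` and a set `T` of `t` voters.
When `v` votes for `-L` and everybody else for `1`, bounded distortion forces the pair `{-L, 1}`, so
the point `3 / 2` has expected cost at most `1 / 2`. This stays true after the voters of `T` move to
`2`, because `2` is a nearest candidate to `3 / 2`. Call the resulting profile `A`, and let `B` be
the profile obtained from it when `v` moves to `0`.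

* In `A` the optimum is at most `t`, so `-L` is missed with probability at most `D t / L`.
  As `3 / 2` pays at most `1 / 2`, the midpoint `-L / 2` of `-L` and `0` pays at most
  `L / 2 + 2 D t / L`.
* In `B` the optimum is at most `1` and every pair except `{1, 2}` costs at least `t`. Hence
  `{1, 2}` has probability at least `1 - D / t`, and `-L / 2` pays at least `L / 2 + 1 - D / t`.

A voter at `-L / 2` may truthfully vote for `0`, so strategy-proofness gives
`1 ≤ D (2 t / L + 1 / t)`, and it remains to choose `t` of order `min {n, √L}`.
-/

section Lottery

variable {m : ℕ} {w : Fin m → Fin m → ℝ} {F G : Fin m → Fin m → ℝ}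

/-- The expectation of a statistic `F` of the elected pair under the pair lottery `w`. Only pairs
`k < l` are summed, so each unordered pair counts once; `expCost` and `expSC` unfold to it. -/
def pairExp (w F : Fin m → Fin m → ℝ) : ℝ :=
  ∑ p ∈ univ.filter (fun p : Fin m × Fin m => p.1 < p.2), w p.1 p.2 * F p.1 p.2

/-- The probability that the unordered pair elected by the lottery `w` lies in `S`. -/
noncomputable def pairProb (w : Fin m → Fin m → ℝ) (S : Set (Sym2 (Fin m))) : ℝ :=
  pairExp w fun k l => S.indicator 1 s(k, l)

lemma pairExp_mono (hw : ∀ k l, 0 ≤ w k l) (h : ∀ k l, F k l ≤ G k l) :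
    pairExp w F ≤ pairExp w G :=
  sum_le_sum fun p _ => mul_le_mul_of_nonneg_left (h p.1 p.2) (hw p.1 p.2)

lemma pairExp_add (w F G : Fin m → Fin m → ℝ) :
    pairExp w (fun k l => F k l + G k l) = pairExp w F + pairExp w G := by
  simp only [pairExp, mul_add, sum_add_distrib]

lemma pairExp_const_mul (w F : Fin m → Fin m → ℝ) (c : ℝ) :
    pairExp w (fun k l => c * F k l) = c * pairExp w F := by
  simp only [pairExp, mul_sum, mul_left_comm]

lemma IsRandMech.pairExp_const {n : ℕ} {f : (Fin n → Fin m) → Fin m → Fin m → ℝ}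
    (hf : IsRandMech f) (a : Fin n → Fin m) (c : ℝ) : pairExp (f a) (fun _ _ => c) = c := by
  rw [pairExp, ← sum_mul, (hf a).2.2.2, one_mul]

end Lottery

section Cost

variable {α : Type*} [PseudoMetricSpace α] {m n : ℕ} {y : Fin m → α} {x : Fin n → α}
  {k l : Fin m} {z : α} {c : ℝ}

lemma le_pairCost (h : ∀ j ∈ s(k, l), c ≤ dist z (y j)) : c ≤ pairCost y k l z :=
  le_min (h k (Sym2.mem_mk_left k l)) (h l (Sym2.mem_mk_right k l))

lemma pairCost_le_dist {j : Fin m} (hj : j ∈ s(k, l)) : pairCost y k l z ≤ dist z (y j) := by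
  rcases Sym2.mem_iff.mp hj with rfl | rfl
  exacts [min_le_left _ _, min_le_right _ _]

lemma pairCost_nonneg (y : Fin m → α) (k l : Fin m) (z : α) : 0 ≤ pairCost y k l z :=
  le_min dist_nonneg dist_nonneg

lemma pairCost_eq_zero {j : Fin m} (hj : j ∈ s(k, l)) : pairCost y k l (y j) = 0 :=
  ((pairCost_le_dist hj).trans_eq (dist_self _)).antisymm (pairCost_nonneg y k l _)

lemma pairCost_le_dist_add (y : Fin m → α) (k l : Fin m) (z z' : α) :
    pairCost y k l z ≤ dist z z' + pairCost y k l z' := by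
  rw [pairCost, pairCost, ← min_add_add_left]
  exact min_le_min (dist_triangle _ _ _) (dist_triangle _ _ _)

lemma pairCost_le_socialCost (y : Fin m → α) (k l : Fin m) (x : Fin n → α) (i : Fin n) :
    pairCost y k l (x i) ≤ socialCost y k l x :=
  single_le_sum (f := fun i => pairCost y k l (x i)) (fun i _ => pairCost_nonneg y k l (x i))
    (mem_univ i)

lemma socialCost_nonneg (y : Fin m → α) (k l : Fin m) (x : Fin n → α) : 0 ≤ socialCost y k l x :=
  sum_nonneg fun i _ => pairCost_nonneg y k l (x i)

lemma card_mul_le_socialCost {T : Finset (Fin n)} (h : ∀ i ∈ T, c ≤ pairCost y k l (x i)) :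
    #T * c ≤ socialCost y k l x :=
  calc #T * c = ∑ _i ∈ T, c := by rw [sum_const, nsmul_eq_mul]
    _ ≤ ∑ i ∈ T, pairCost y k l (x i) := sum_le_sum h
    _ ≤ socialCost y k l x :=
      sum_le_univ_sum_of_nonneg fun i => pairCost_nonneg y k l (x i)

lemma socialCost_le_card_mul {T : Finset (Fin n)} (hT : ∀ i ∈ T, pairCost y k l (x i) ≤ c)
    (h0 : ∀ i ∉ T, pairCost y k l (x i) = 0) : socialCost y k l x ≤ #T * c :=
  calc socialCost y k l x = ∑ i ∈ T, pairCost y k l (x i) :=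
      (sum_subset (subset_univ T) fun i _ hi => h0 i hi).symm
    _ ≤ ∑ _i ∈ T, c := sum_le_sum hT
    _ = #T * c := by rw [sum_const, nsmul_eq_mul]

lemma OPT_le_socialCost (hkl : k ≠ l) : OPT y x ≤ socialCost y k l x := by
  refine csInf_le ⟨0, ?_⟩ ⟨k, l, hkl, rfl⟩
  rintro _ ⟨k, l, -, rfl⟩
  exact socialCost_nonneg y k l x

lemma OPT_update_comp_le (hkl : k ≠ l) {a : Fin n → Fin m} (ha : ∀ i, a i ∈ s(k, l)) (j : Fin n)
    (z : α) : OPT y (Function.update (y ∘ a) j z) ≤ dist z (y (a j)) :=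
  calc OPT y (Function.update (y ∘ a) j z)
      ≤ socialCost y k l (Function.update (y ∘ a) j z) := OPT_le_socialCost hkl
    _ ≤ #{j} * dist z (y (a j)) := socialCost_le_card_mul
      (fun i hi => by
        rw [mem_singleton.mp hi, Function.update_self]
        exact pairCost_le_dist (ha j))
      (fun i hi => by
        rw [Function.update_of_ne (by simpa using hi)]
        exact pairCost_eq_zero (ha i))
    _ = dist z (y (a j)) := by simp

lemma OPT_nonneg (y : Fin m → α) (x : Fin n → α) : 0 ≤ OPT y x := by
  refine Real.sInf_nonneg ?_
  rintro _ ⟨k, l, -, rfl⟩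
  exact socialCost_nonneg y k l x

lemma exists_OPT_eq_socialCost [Nontrivial (Fin m)] (y : Fin m → α) (x : Fin n → α) :
    ∃ k l, OPT y x = socialCost y k l x := by
  let costs : Set ℝ := {c | ∃ k l : Fin m, k ≠ l ∧ c = socialCost y k l x}
  have hfin : costs.Finite := by
    refine (Set.finite_range fun p : Fin m × Fin m => socialCost y p.1 p.2 x).subset ?_
    rintro _ ⟨k, l, -, rfl⟩
    exact ⟨(k, l), rfl⟩
  have hne : costs.Nonempty :=
    let ⟨k, l, hkl⟩ := exists_pair_ne (Fin m)
    ⟨_, k, l, hkl, rfl⟩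
  obtain ⟨k, l, -, h⟩ := hne.csInf_mem hfin
  exact ⟨k, l, h⟩

lemma OPT_pos {α : Type*} [MetricSpace α] [Nontrivial (Fin m)] (y : Fin m → α) {x : Fin n → α}
    {i₁ i₂ i₃ : Fin n} (h₁₂ : x i₁ ≠ x i₂) (h₁₃ : x i₁ ≠ x i₃) (h₂₃ : x i₂ ≠ x i₃) :
    0 < OPT y x := by
  obtain ⟨k, l, hkl⟩ := exists_OPT_eq_socialCost y x
  refine (OPT_nonneg y x).lt_of_ne' fun h0 => ?_
  have at_winner (i : Fin n) : x i = y k ∨ x i = y l := by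
    have hi := pairCost_le_socialCost y k l x i
    rw [← hkl, h0, pairCost, min_le_iff, dist_le_zero, dist_le_zero] at hi
    exact hi
  grind

end Cost

section Mechanism

variable {α : Type*} [PseudoMetricSpace α] {m n : ℕ} {y : Fin m → α}
  {f : (Fin n → Fin m) → Fin m → Fin m → ℝ} {a : Fin n → Fin m} {x : Fin n → α}

lemma consistent_comp (y : Fin m → α) (a : Fin n → Fin m) : Consistent y a (y ∘ a) := fun i k => by
  rw [Function.comp_apply, dist_self]
  exact dist_nonneg

lemma Consistent.update (h : Consistent y a x) {i : Fin n} {z : α}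
    (hz : ∀ k, dist z (y (a i)) ≤ dist z (y k)) : Consistent y a (Function.update x i z) := by
  intro j k
  rcases eq_or_ne j i with rfl | hj
  · simpa only [Function.update_self] using hz k
  · simpa only [Function.update_of_ne hj] using h j k

lemma IsRandMech.expSC_nonneg (hf : IsRandMech f) (y : Fin m → α) (a : Fin n → Fin m)
    (x : Fin n → α) : 0 ≤ expSC y f a x :=
  sum_nonneg fun p _ => mul_nonneg ((hf a).1 _ _) (socialCost_nonneg y p.1 p.2 x)

lemma IsRandMech.expCost_le_dist_add_expSC (hf : IsRandMech f) (y : Fin m → α) (a : Fin n → Fin m)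
    (x : Fin n → α) (z : α) (i : Fin n) :
    expCost y f a z ≤ dist z (x i) + expSC y f a x :=
  calc expCost y f a z
      ≤ pairExp (f a) fun k l => dist z (x i) + socialCost y k l x :=
        pairExp_mono (hf a).1 fun k l => (pairCost_le_dist_add y k l z (x i)).trans
          (by gcongr; exact pairCost_le_socialCost y k l x i)
    _ = dist z (x i) + expSC y f a x := by
        rw [pairExp_add, hf.pairExp_const]
        rfl

lemma IsRandMech.mul_pairProb_le_expSC (hf : IsRandMech f) {S : Set (Sym2 (Fin m))} {c : ℝ}
    (h : ∀ k l, s(k, l) ∈ S → c ≤ socialCost y k l x) :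
    c * pairProb (f a) S ≤ expSC y f a x := by
  rw [pairProb, ← pairExp_const_mul]
  refine pairExp_mono (G := fun k l => socialCost y k l x) (hf a).1 fun k l => ?_
  by_cases hS : s(k, l) ∈ S
  · simpa [hS] using h k l hS
  · simpa [hS] using socialCost_nonneg y k l x

lemma RandSP.expCost_update_le (hsp : RandSP y f) {z : α} {e : Fin m}
    (he : ∀ k, dist z (y e) ≤ dist z (y k)) (a : Fin n → Fin m) (i : Fin n) :
    expCost y f (Function.update a i e) z ≤ expCost y f a z := by
  simpa only [Function.update_eq_self] using hsp i z a e (a i) he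

lemma RandSP.expCost_piecewise_le (hsp : RandSP y f) {z : α} {e : Fin m}
    (he : ∀ k, dist z (y e) ≤ dist z (y k)) (a : Fin n → Fin m) (T : Finset (Fin n)) :
    expCost y f (T.piecewise (fun _ => e) a) z ≤ expCost y f a z := by
  induction T using Finset.induction_on with
  | empty => rw [piecewise_empty]
  | insert i T _ ih =>
    rw [piecewise_insert]
    exact (hsp.expCost_update_le he _ i).trans ih

/-- The mechanism `f` has distortion at most `D`. Location profiles with `OPT y x = 0` impose no
condition other than `0 ≤ D`, because there the quotient is `0`. -/
def DistortionLE (y : Fin m → α) (f : (Fin n → Fin m) → Fin m → Fin m → ℝ) (D : ℝ) : Prop :=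
  ∀ a x, Consistent y a x → expSC y f a x / OPT y x ≤ D

lemma DistortionLE.expSC_le {D c : ℝ} (hD : DistortionLE y f D) (hf : IsRandMech f)
    (hx : Consistent y a x) (hpos : 0 < OPT y x) (hc : OPT y x ≤ c) : expSC y f a x ≤ D * c := by
  have hD0 : 0 ≤ D := (div_nonneg (hf.expSC_nonneg y a x) hpos.le).trans (hD a x hx)
  calc expSC y f a x ≤ D * OPT y x := (div_le_iff₀ hpos).mp (hD a x hx)
    _ ≤ D * c := by gcongr

end Mechanism

/-- Candidates on the line with one outlier: `far` sits at `-L`, each `cᵢ` at `i`, and all remaining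
candidates at `3` or further right. -/
structure OutlierConfig {m : ℕ} (y : Fin m → ℝ) (L : ℝ) (far c₀ c₁ c₂ : Fin m) : Prop where
  far_eq : y far = -L
  zero_eq : y c₀ = 0
  one_eq : y c₁ = 1
  two_eq : y c₂ = 2
  three_le : ∀ k, k ≠ far → k ≠ c₀ → k ≠ c₁ → k ≠ c₂ → 3 ≤ y k

namespace OutlierConfig

variable {m : ℕ} {y : Fin m → ℝ} {L : ℝ} {far c₀ c₁ c₂ : Fin m}

lemma of_eq_ite (hm : 4 ≤ m)
    (hy : ∀ k : Fin m, y k = if (k : ℕ) = 0 then -L else ((k : ℕ) : ℝ) - 1) :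
    OutlierConfig y L ⟨0, by omega⟩ ⟨1, by omega⟩ ⟨2, by omega⟩ ⟨3, by omega⟩ where
  far_eq := by simp [hy]
  zero_eq := by simp [hy]
  one_eq := by norm_num [hy]
  two_eq := by norm_num [hy]
  three_le k h₀ h₁ h₂ h₃ := by
    rw [Ne, Fin.ext_iff] at h₀ h₁ h₂ h₃
    have hk : (4 : ℝ) ≤ (k : ℕ) := by exact_mod_cast (by grind : 4 ≤ (k : ℕ))
    rw [hy, if_neg h₀]
    linarith

lemma position_cases (hy : OutlierConfig y L far c₀ c₁ c₂) (k : Fin m) :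
    y k = -L ∨ y k = 0 ∨ y k = 1 ∨ y k = 2 ∨ 3 ≤ y k := by
  grind [OutlierConfig]

lemma le_dist_neg (hy : OutlierConfig y L far c₀ c₁ c₂) {k : Fin m} (hk : k ≠ far) :
    L ≤ dist (-L) (y k) := by
  rw [Real.dist_eq]
  grind [OutlierConfig]

lemma one_le_dist_one (hy : OutlierConfig y L far c₀ c₁ c₂) (hL : 0 < L) {k : Fin m}
    (hk : k ≠ c₁) : 1 ≤ dist 1 (y k) := by
  rw [Real.dist_eq]
  grind [OutlierConfig]

lemma one_le_dist_two (hy : OutlierConfig y L far c₀ c₁ c₂) (hL : 0 < L) {k : Fin m}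
    (hk : k ≠ c₂) : 1 ≤ dist 2 (y k) := by
  rw [Real.dist_eq]
  grind [OutlierConfig]

lemma half_le_dist_three_halves (hy : OutlierConfig y L far c₀ c₁ c₂) (hL : 0 < L) (k : Fin m) :
    1 / 2 ≤ dist (3 / 2) (y k) := by
  rw [Real.dist_eq]
  grind [hy.position_cases k]

lemma half_le_dist_neg_half (hy : OutlierConfig y L far c₀ c₁ c₂) (k : Fin m) :
    L / 2 ≤ dist (-L / 2) (y k) := by
  rw [Real.dist_eq]
  grind [hy.position_cases k]

lemma one_nearest (hy : OutlierConfig y L far c₀ c₁ c₂) (hL : 0 < L) {z : ℝ} (h₁ : 1 ≤ z)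
    (h₂ : z ≤ 3 / 2) (k : Fin m) : dist z (y c₁) ≤ dist z (y k) := by
  rw [hy.one_eq, Real.dist_eq, Real.dist_eq]
  grind [hy.position_cases k]

lemma two_nearest_three_halves (hy : OutlierConfig y L far c₀ c₁ c₂) (hL : 0 < L) (k : Fin m) :
    dist (3 / 2) (y c₂) ≤ dist (3 / 2) (y k) := by
  have h : dist (3 / 2) (y c₂) = 1 / 2 := by rw [hy.two_eq, Real.dist_eq]; norm_num [abs_of_neg]
  exact h.trans_le (hy.half_le_dist_three_halves hL k)

lemma zero_nearest_neg_half (hy : OutlierConfig y L far c₀ c₁ c₂) (hL : 0 < L) (k : Fin m) :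
    dist (-L / 2) (y c₀) ≤ dist (-L / 2) (y k) := by
  have h : dist (-L / 2) (y c₀) = L / 2 := by rw [hy.zero_eq, Real.dist_eq]; grind
  exact h.trans_le (hy.half_le_dist_neg_half k)

lemma far_ne_one (hy : OutlierConfig y L far c₀ c₁ c₂) (hL : 0 < L) : far ≠ c₁ := by
  grind [OutlierConfig]

lemma one_ne_two (hy : OutlierConfig y L far c₀ c₁ c₂) : c₁ ≠ c₂ := by
  grind [OutlierConfig]

section Lottery

variable {n : ℕ} {f : (Fin n → Fin m) → Fin m → Fin m → ℝ}

lemma expCost_neg_half_le (hy : OutlierConfig y L far c₀ c₁ c₂) (hL : 0 < L) (hf : IsRandMech f)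
    (a : Fin n → Fin m) :
    expCost y f a (-L / 2) ≤
      expCost y f a (3 / 2) + ((L / 2 - 1 / 2) + 2 * pairProb (f a) {e | far ∉ e}) := by
  have pointwise (k l : Fin m) : pairCost y k l (-L / 2) ≤ pairCost y k l (3 / 2) +
      ((L / 2 - 1 / 2) + 2 * ({e | far ∉ e} : Set (Sym2 (Fin m))).indicator 1 s(k, l)) := by
    by_cases hfar : far ∈ s(k, l)
    · have h₁ : pairCost y k l (-L / 2) ≤ L / 2 :=
        (pairCost_le_dist hfar).trans_eq (by rw [hy.far_eq, Real.dist_eq]; grind)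
      have h₂ : 1 / 2 ≤ pairCost y k l (3 / 2) :=
        le_pairCost fun j _ => hy.half_le_dist_three_halves hL j
      rw [Set.indicator_of_notMem (not_not_intro hfar)]
      linarith
    · have h₁ := pairCost_le_dist_add y k l (-L / 2) (3 / 2)
      have h₂ : dist (-L / 2) (3 / 2) = L / 2 + 3 / 2 := by rw [Real.dist_eq]; grind
      rw [Set.indicator_of_mem hfar, Pi.one_apply]
      linarith
  refine (pairExp_mono (hf a).1 pointwise).trans_eq ?_
  rw [pairExp_add, pairExp_add, pairExp_const_mul, hf.pairExp_const]
  rfl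

lemma le_expCost_neg_half_add (hy : OutlierConfig y L far c₀ c₁ c₂) (hL : 0 < L)
    (hf : IsRandMech f) (a : Fin n → Fin m) :
    L / 2 + 1 ≤ expCost y f a (-L / 2) + pairProb (f a) {s(c₁, c₂)}ᶜ := by
  have pointwise (k l : Fin m) : L / 2 + 1 ≤ pairCost y k l (-L / 2) +
      ({s(c₁, c₂)}ᶜ : Set (Sym2 (Fin m))).indicator 1 s(k, l) := by
    by_cases hkl : s(k, l) = s(c₁, c₂)
    · have h : L / 2 + 1 ≤ pairCost y k l (-L / 2) := le_pairCost fun j hj => by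
        rw [hkl, Sym2.mem_iff] at hj
        rw [Real.dist_eq]
        grind [OutlierConfig]
      rw [Set.indicator_of_notMem (by simp [hkl])]
      linarith
    · have h : L / 2 ≤ pairCost y k l (-L / 2) :=
        le_pairCost fun j _ => hy.half_le_dist_neg_half j
      rw [Set.indicator_of_mem hkl, Pi.one_apply]
      linarith
  calc L / 2 + 1 = pairExp (f a) fun _ _ => L / 2 + 1 := (hf.pairExp_const a _).symm
    _ ≤ _ := pairExp_mono (hf a).1 pointwise
    _ = _ := pairExp_add _ _ _

end Lottery

end OutlierConfig

section SplitProfile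

variable {m n : ℕ} {v i : Fin n} {T : Finset (Fin n)} {b d e : Fin m}

/-- The action profile in which `v` votes for `b`, the voters in `T` for `e`, and the others
for `d`. -/
def splitProfile (v : Fin n) (T : Finset (Fin n)) (b d e : Fin m) : Fin n → Fin m :=
  T.piecewise (fun _ => e) (Function.update (fun _ => d) v b)

lemma splitProfile_self (hv : v ∉ T) : splitProfile v T b d e v = b := by
  simp [splitProfile, hv]

lemma splitProfile_of_mem (hi : i ∈ T) : splitProfile v T b d e i = e := by
  simp [splitProfile, hi]

lemma splitProfile_of_notMem (hi : i ∉ T) (hiv : i ≠ v) : splitProfile v T b d e i = d := by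
  simp [splitProfile, hi, hiv]

lemma update_splitProfile_self (hv : v ∉ T) (b' : Fin m) :
    Function.update (splitProfile v T b d e) v b' = splitProfile v T b' d e := by
  rw [splitProfile, update_piecewise_of_notMem _ _ _ hv, Function.update_idem, splitProfile]

lemma OPT_comp_splitProfile_pos {α : Type*} [MetricSpace α] {y : Fin m → α} (hv : v ∉ T)
    (hT : T.Nonempty) (hrest : (insert v T)ᶜ.Nonempty) (hbd : y b ≠ y d) (hbe : y b ≠ y e)
    (hde : y d ≠ y e) : 0 < OPT y (y ∘ splitProfile v T b d e) := by
  obtain ⟨i, hi⟩ := hT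
  obtain ⟨j, hj⟩ := hrest
  rw [mem_compl, mem_insert, not_or] at hj
  have : Nontrivial (Fin m) := ⟨b, d, fun h => hbd (h ▸ rfl)⟩
  refine OPT_pos y (i₁ := v) (i₂ := j) (i₃ := i) ?_ ?_ ?_ <;>
    simpa only [Function.comp_apply, splitProfile_self hv, splitProfile_of_mem hi,
      splitProfile_of_notMem hj.2 hj.1]

end SplitProfile

namespace DistortionLE

variable {m n : ℕ} {y : Fin m → ℝ} {L D : ℝ} {far c₀ c₁ c₂ : Fin m}
  {f : (Fin n → Fin m) → Fin m → Fin m → ℝ} {v : Fin n} {T : Finset (Fin n)}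

-- Placing all voters at candidates would make the optimum `0`, where the quotient says nothing;
-- so one voter is moved off `1` by `ε`, and `ε` tends to `0`.
lemma expCost_three_halves_le_add_mul (hD : DistortionLE y f D) (hf : IsRandMech f)
    (hy : OutlierConfig y L far c₀ c₁ c₂) (hL : 0 < L) {i j : Fin n} (hi : i ≠ v) (hj : j ≠ v)
    (hij : i ≠ j) {ε : ℝ} (hε₀ : 0 < ε) (hε : ε ≤ 1 / 2) :
    expCost y f (Function.update (fun _ => c₁) v far) (3 / 2) ≤ 1 / 2 + D * ε := by
  set a : Fin n → Fin m := Function.update (fun _ => c₁) v far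
  have hav : a v = far := Function.update_self ..
  have ha {u : Fin n} (hu : u ≠ v) : a u = c₁ := Function.update_of_ne hu ..
  have : Nontrivial (Fin m) := ⟨far, c₁, hy.far_ne_one hL⟩
  set x : Fin n → ℝ := Function.update (y ∘ a) j (1 + ε)
  have hxj : x j = 1 + ε := Function.update_self ..
  have hx {u : Fin n} (hu : u ≠ j) : x u = y (a u) := Function.update_of_ne hu ..
  have hxv : x v = -L := by rw [hx hj.symm, hav, hy.far_eq]
  have hxi : x i = 1 := by rw [hx hij, ha hi, hy.one_eq]
  have hcons : Consistent y a x := (consistent_comp y a).update <| by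
    rw [ha hj]
    exact hy.one_nearest hL (by linarith) (by linarith)
  have hpos : 0 < OPT y x :=
    OPT_pos y (i₁ := v) (i₂ := i) (i₃ := j) (by grind) (by grind) (by grind)
  have hopt : OPT y x ≤ ε :=
    (OPT_update_comp_le (hy.far_ne_one hL) (by grind) j _).trans_eq <| by
      rw [ha hj, hy.one_eq, Real.dist_eq, add_sub_cancel_left, abs_of_pos hε₀]
  calc expCost y f a (3 / 2) ≤ dist (3 / 2) (x i) + expSC y f a x :=
        hf.expCost_le_dist_add_expSC y a x _ i
    _ = 1 / 2 + expSC y f a x := by rw [hxi, Real.dist_eq]; norm_num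
    _ ≤ 1 / 2 + D * ε := by gcongr; exact hD.expSC_le hf hcons hpos hopt

lemma expCost_three_halves_le (hD : DistortionLE y f D) (hf : IsRandMech f)
    (hy : OutlierConfig y L far c₀ c₁ c₂) (hL : 0 < L) {i j : Fin n} (hi : i ≠ v) (hj : j ≠ v)
    (hij : i ≠ j) : expCost y f (Function.update (fun _ => c₁) v far) (3 / 2) ≤ 1 / 2 := by
  have hlim : Filter.Tendsto (fun ε : ℝ => 1 / 2 + D * ε) (nhdsWithin 0 (Set.Ioi 0))
      (nhds (1 / 2)) := by
    have hcont : Continuous fun ε : ℝ => 1 / 2 + D * ε := by fun_prop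
    simpa using (hcont.tendsto 0).mono_left nhdsWithin_le_nhds
  exact ge_of_tendsto hlim <| Filter.eventually_of_mem (Ioc_mem_nhdsGT one_half_pos) fun ε hε =>
    hD.expCost_three_halves_le_add_mul hf hy hL hi hj hij hε.1 hε.2

lemma mul_pairProb_far_notMem_le (hD : DistortionLE y f D) (hf : IsRandMech f)
    (hy : OutlierConfig y L far c₀ c₁ c₂) (hL : 0 < L) (hv : v ∉ T) (hT : T.Nonempty)
    (hrest : (insert v T)ᶜ.Nonempty) :
    L * pairProb (f (splitProfile v T far c₁ c₂)) {e | far ∉ e} ≤ D * #T := by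
  set a := splitProfile v T far c₁ c₂ with ha
  have hpos : 0 < OPT y (y ∘ a) :=
    OPT_comp_splitProfile_pos hv hT hrest (by grind [OutlierConfig]) (by grind [OutlierConfig])
      (by grind [OutlierConfig])
  have hopt : OPT y (y ∘ a) ≤ #T := calc
    OPT y (y ∘ a) ≤ socialCost y far c₁ (y ∘ a) := OPT_le_socialCost (hy.far_ne_one hL)
    _ ≤ #T * 1 := socialCost_le_card_mul
      (fun i hi => by
        rw [Function.comp_apply, ha, splitProfile_of_mem hi, hy.two_eq]
        refine (pairCost_le_dist (Sym2.mem_mk_right far c₁)).trans_eq ?_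
        rw [hy.one_eq, Real.dist_eq]
        norm_num)
      (fun i hi => pairCost_eq_zero (by grind [splitProfile_self, splitProfile_of_notMem]))
    _ = #T := mul_one _
  refine (hf.mul_pairProb_le_expSC fun k l hkl => ?_).trans
    (hD.expSC_le hf (consistent_comp y a) hpos hopt)
  refine le_trans (le_pairCost fun j hj => ?_) (pairCost_le_socialCost y k l _ v)
  rw [Function.comp_apply, ha, splitProfile_self hv, hy.far_eq]
  exact hy.le_dist_neg fun h => hkl (h ▸ hj)

lemma card_mul_pairProb_ne_le (hD : DistortionLE y f D) (hf : IsRandMech f)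
    (hy : OutlierConfig y L far c₀ c₁ c₂) (hL : 0 < L) (hv : v ∉ T) (hT : T.Nonempty)
    (hrest : #T ≤ #(insert v T)ᶜ) :
    #T * pairProb (f (splitProfile v T c₀ c₁ c₂)) {s(c₁, c₂)}ᶜ ≤ D := by
  set a := splitProfile v T c₀ c₁ c₂ with ha
  have hpos : 0 < OPT y (y ∘ a) :=
    OPT_comp_splitProfile_pos hv hT (card_pos.mp (hT.card_pos.trans_le hrest))
      (by grind [OutlierConfig]) (by grind [OutlierConfig]) (by grind [OutlierConfig])
  have hopt : OPT y (y ∘ a) ≤ 1 := calc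
    OPT y (y ∘ a) ≤ socialCost y c₁ c₂ (y ∘ a) := OPT_le_socialCost hy.one_ne_two
    _ ≤ #{v} * 1 := socialCost_le_card_mul
      (fun i hi => by
        rw [mem_singleton.mp hi, Function.comp_apply, ha, splitProfile_self hv, hy.zero_eq]
        refine (pairCost_le_dist (Sym2.mem_mk_left c₁ c₂)).trans_eq ?_
        rw [hy.one_eq, Real.dist_eq]
        norm_num)
      (fun i hi => pairCost_eq_zero (by grind [splitProfile_of_mem, splitProfile_of_notMem]))
    _ = 1 := by simp
  have hcost (k l : Fin m) (hkl : s(k, l) ≠ s(c₁, c₂)) : #T ≤ socialCost y k l (y ∘ a) := by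
    by_cases h₂ : c₂ ∈ s(k, l)
    · have h₁ : c₁ ∉ s(k, l) := fun h₁ => hkl ((Sym2.mem_and_mem_iff hy.one_ne_two).mp ⟨h₁, h₂⟩)
      calc (#T : ℝ) ≤ #(insert v T)ᶜ * 1 := by rw [mul_one]; exact_mod_cast hrest
        _ ≤ socialCost y k l (y ∘ a) := card_mul_le_socialCost fun i hi => by
          rw [mem_compl, mem_insert, not_or] at hi
          rw [Function.comp_apply, ha, splitProfile_of_notMem hi.2 hi.1, hy.one_eq]
          exact le_pairCost fun j hj => hy.one_le_dist_one hL (ne_of_mem_of_not_mem hj h₁)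
    · calc (#T : ℝ) = #T * 1 := (mul_one _).symm
        _ ≤ socialCost y k l (y ∘ a) := card_mul_le_socialCost fun i hi => by
          rw [Function.comp_apply, ha, splitProfile_of_mem hi, hy.two_eq]
          exact le_pairCost fun j hj => hy.one_le_dist_two hL (ne_of_mem_of_not_mem hj h₂)
  calc #T * pairProb (f a) {s(c₁, c₂)}ᶜ ≤ expSC y f a (y ∘ a) := hf.mul_pairProb_le_expSC hcost
    _ ≤ D * 1 := hD.expSC_le hf (consistent_comp y a) hpos hopt
    _ = D := mul_one D

lemma one_le_mul_card_div_add (hD : DistortionLE y f D) (hf : IsRandMech f) (hsp : RandSP y f)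
    (hy : OutlierConfig y L far c₀ c₁ c₂) (hL : 0 < L) (hv : v ∉ T) (hT : T.Nonempty)
    (hrest : #T ≤ #(insert v T)ᶜ) : 1 ≤ D * (2 * #T / L + 1 / #T) := by
  have hrest' : (insert v T)ᶜ.Nonempty := card_pos.mp (hT.card_pos.trans_le hrest)
  have hA : expCost y f (splitProfile v T far c₁ c₂) (3 / 2) ≤ 1 / 2 := by
    obtain ⟨i, hi⟩ := hT
    obtain ⟨j, hj⟩ := hrest'
    rw [mem_compl, mem_insert, not_or] at hj
    exact (hsp.expCost_piecewise_le (hy.two_nearest_three_halves hL) _ T).trans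
      (hD.expCost_three_halves_le hf hy hL (ne_of_mem_of_not_mem hi hv) hj.1
        (ne_of_mem_of_not_mem hi hj.2))
  have hAB : expCost y f (splitProfile v T c₀ c₁ c₂) (-L / 2) ≤
      expCost y f (splitProfile v T far c₁ c₂) (-L / 2) := by
    rw [← update_splitProfile_self hv c₀]
    exact hsp.expCost_update_le (hy.zero_nearest_neg_half hL) _ v
  have hprob : 1 ≤ 2 * pairProb (f (splitProfile v T far c₁ c₂)) {e | far ∉ e} +
      pairProb (f (splitProfile v T c₀ c₁ c₂)) {s(c₁, c₂)}ᶜ := by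
    linarith [hy.expCost_neg_half_le hL hf (splitProfile v T far c₁ c₂),
      hy.le_expCost_neg_half_add hL hf (splitProfile v T c₀ c₁ c₂)]
  have hT0 : (0 : ℝ) < #T := by exact_mod_cast hT.card_pos
  have hpA := (le_div_iff₀' hL).mpr (hD.mul_pairProb_far_notMem_le hf hy hL hv hT hrest')
  have hpB := (le_div_iff₀' hT0).mpr (hD.card_mul_pairProb_ne_le hf hy hL hv hT hrest)
  calc 1 ≤ 2 * (D * #T / L) + D / #T := hprob.trans (by gcongr)
    _ = D * (2 * #T / L + 1 / #T) := by ring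

end DistortionLE

lemma exists_mul_add_lt_one {n : ℕ} (hn : 3 ≤ n) {L : ℝ} (hL : 1 ≤ L) :
    ∃ t : ℕ, 1 ≤ t ∧ 2 * t + 1 ≤ n ∧
      1 / 12 * min (n : ℝ) (√(L + 2)) * (2 * t / L + 1 / t) < 1 := by
  set M := min (n : ℝ) (√(L + 2))
  have hnR : (3 : ℝ) ≤ n := by exact_mod_cast hn
  have hM : 3 / 2 ≤ M := le_min (by linarith) (Real.le_sqrt_of_sq_le (by linarith))
  have hMn : M ≤ n := min_le_left _ _
  have hMsq : M ^ 2 ≤ L + 2 := (Real.le_sqrt' (by linarith)).mp (min_le_right _ _)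
  have ht₁ : 1 ≤ ⌈M / 6⌉₊ := Nat.ceil_pos.mpr (by linarith)
  have hle : M / 6 ≤ ⌈M / 6⌉₊ := Nat.le_ceil _
  have hlt : (⌈M / 6⌉₊ : ℝ) < M / 6 + 1 := Nat.ceil_lt_add_one (by linarith)
  have htn : 6 * ⌈M / 6⌉₊ < n + 6 := by exact_mod_cast (by linarith : (6 * ⌈M / 6⌉₊ : ℝ) < n + 6)
  generalize ⌈M / 6⌉₊ = t at *
  have ht₀ : (0 : ℝ) < t := by exact_mod_cast ht₁
  refine ⟨t, ht₁, by omega, ?_⟩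
  have hfar : M * t / L < 3 := by
    rw [div_lt_iff₀ (by linarith)]
    calc M * t < M * M := by gcongr; linarith
      _ ≤ 3 * L := by linarith
  have hnear : M / t ≤ 6 := by
    rw [div_le_iff₀ ht₀]
    linarith
  calc 1 / 12 * M * (2 * t / L + 1 / t) = 1 / 6 * (M * t / L) + 1 / 12 * (M / t) := by ring
    _ < 1 := by linarith

lemma exists_notMem_card_eq_le_card_compl {n t : ℕ} (ht : 2 * t + 1 ≤ n) :
    ∃ (v : Fin n) (T : Finset (Fin n)), v ∉ T ∧ #T = t ∧ t ≤ #(insert v T)ᶜ := by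
  have v : Fin n := ⟨0, by omega⟩
  obtain ⟨T, hTv, hT⟩ := exists_subset_card_eq (s := univ.erase v) (n := t)
    (by rw [card_erase_of_mem (mem_univ v), card_fin]; omega)
  have hv : v ∉ T := fun h => notMem_erase v univ (hTv h)
  refine ⟨v, T, hv, hT, ?_⟩
  rw [card_compl, card_insert_of_notMem hv, hT, Fintype.card_fin]
  omega

theorem stmt2_general {m n : ℕ} (hn : 3 ≤ n) {L : ℝ} (hL : 1 ≤ L) {y : Fin m → ℝ}
    {far c₀ c₁ c₂ : Fin m} (hy : OutlierConfig y L far c₀ c₁ c₂)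
    {f : (Fin n → Fin m) → Fin m → Fin m → ℝ} (hmech : IsRandMech f) (hsp : RandSP y f) :
    ∃ (a : Fin n → Fin m) (x : Fin n → ℝ), Consistent y a x ∧
      1 / 12 * min (n : ℝ) (√(L + 2)) ≤ expSC y f a x / OPT y x := by
  by_contra! hlt
  have hD : DistortionLE y f (1 / 12 * min (n : ℝ) (√(L + 2))) := fun a x hx => (hlt a x hx).le
  obtain ⟨t, ht, htn, hsmall⟩ := exists_mul_add_lt_one hn hL
  obtain ⟨v, T, hv, rfl, hrest⟩ := exists_notMem_card_eq_le_card_compl htn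
  exact hsmall.not_ge <|
    hD.one_le_mul_card_div_add hmech hsp hy (by linarith) hv (card_pos.mp ht) hrest

/-- `m > 4` candidates on the real line at `-σ+(m-2), 0, 1, ..., m-2`
(with `σ - m + 4 ≥ 3`): every strategy-proof randomized two-winner scv
mechanism has distortion at least `(1/12) · min {n, √(σ - m + 4)}`. -/
theorem stmt2 (m : ℕ) (hm : 4 < m) (n : ℕ) (hn : 3 ≤ n) (σ : ℝ)
    (hσ : 3 ≤ σ - (m : ℝ) + 4)
    (y : Fin m → ℝ)
    (hy : ∀ k : Fin m,
      y k = if (k : ℕ) = 0 then -σ + ((m : ℝ) - 2) else ((k : ℕ) : ℝ) - 1)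
    (f : (Fin n → Fin m) → Fin m → Fin m → ℝ)
    (hmech : IsRandMech f) (hsp : RandSP y f) :
    ∃ (a : Fin n → Fin m) (x : Fin n → ℝ), Consistent y a x ∧
      (1 / 12) * min (n : ℝ) (Real.sqrt (σ - (m : ℝ) + 4)) ≤
        expSC y f a x / OPT y x := by
  have hline : OutlierConfig y (σ - m + 2) _ _ _ _ :=
    .of_eq_ite hm.le fun k => by rw [hy k]; congr 1; ring
  rw [show σ - m + 4 = σ - m + 2 + 2 by ring]
  exact stmt2_general hn (by linarith) hline hmech hsp
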